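/- arXiv:1510.06785 — 5 statements merged into one kernel-verified Lean document; each statement's English description precedes it below -/
import Mathlib

section
/- For every nonnegative weight vector w ∈ ℝ^N with Σᵢ wᵢ = c, the algebraic connectivity of the supra-Laplacian satisfies λ₂(L(w)) ≤ 2c/N. (Hence the optimal value F(c) of the budget-constrained weight design problem is at most 2c/N.) -/
open Matrix

/-- The supra-Laplacian of a two-layer multiplex with layer Laplacians `L₁`, `L₂`
and one-to-one inter-layer weights `w`: the block matrix
`[[L₁ + W, −W], [−W, L₂ + W]]` with `W = diag w`. -/
noncomputable def supraLaplacian {N : ℕ} (L₁ L₂ : Matrix (Fin N) (Fin N) ℝ)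
    (w : Fin N → ℝ) : Matrix (Fin N ⊕ Fin N) (Fin N ⊕ Fin N) ℝ :=
  Matrix.fromBlocks (L₁ + Matrix.diagonal w) (-Matrix.diagonal w)
    (-Matrix.diagonal w) (L₂ + Matrix.diagonal w)

/-- Algebraic connectivity: the minimum of `vᵀ M v` over unit vectors `v`
orthogonal to the all-ones vector (the minimum is attained, so it equals the inf). -/
noncomputable def lambda2 {n : Type*} [Fintype n] (M : Matrix n n ℝ) : ℝ :=
  sInf {x : ℝ | ∃ v : n → ℝ, v ⬝ᵥ v = 1 ∧ v ⬝ᵥ (fun _ => 1) = 0 ∧ x = v ⬝ᵥ M *ᵥ v}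

theorem supra_quad {N : ℕ} (L₁ L₂ : Matrix (Fin N) (Fin N) ℝ) (w a b : Fin N → ℝ) :
    Sum.elim a b ⬝ᵥ supraLaplacian L₁ L₂ w *ᵥ Sum.elim a b
      = a ⬝ᵥ L₁ *ᵥ a + b ⬝ᵥ L₂ *ᵥ b + ∑ i, w i * (a i - b i) ^ 2 := by
  have h : ∑ i, w i * (a i - b i) ^ 2 =
      a ⬝ᵥ diagonal w *ᵥ a - a ⬝ᵥ diagonal w *ᵥ b
        - b ⬝ᵥ diagonal w *ᵥ a + b ⬝ᵥ diagonal w *ᵥ b := by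
    simp only [dotProduct, mulVec_diagonal, ← Finset.sum_sub_distrib, ← Finset.sum_add_distrib]
    refine Finset.sum_congr rfl fun i _ => ?_
    ring
  rw [h, supraLaplacian, fromBlocks_mulVec, sumElim_dotProduct_sumElim]
  simp only [Sum.elim_comp_inl, Sum.elim_comp_inr, add_mulVec, neg_mulVec, dotProduct_add,
    dotProduct_neg]
  ring

theorem stmt1 {N : ℕ} (hN : 1 ≤ N)
    (L₁ L₂ : Matrix (Fin N) (Fin N) ℝ)
    (hL₁ : L₁.PosSemidef) (hL₂ : L₂.PosSemidef)
    (hL₁1 : L₁ *ᵥ (fun _ => 1) = 0) (hL₂1 : L₂ *ᵥ (fun _ => 1) = 0)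
    (w : Fin N → ℝ) (hw : ∀ i, 0 ≤ w i) (c : ℝ) (hc : c = ∑ i, w i) :
    lambda2 (supraLaplacian L₁ L₂ w) ≤ 2 * c / N := by
  have hN' : (0 : ℝ) < N := by exact_mod_cast hN
  unfold lambda2
  refine csInf_le ⟨0, ?_⟩ ?_
  · rintro x ⟨v, -, -, rfl⟩
    have h1 := hL₁.dotProduct_mulVec_nonneg (v ∘ Sum.inl)
    have h2 := hL₂.dotProduct_mulVec_nonneg (v ∘ Sum.inr)
    have h3 : 0 ≤ ∑ i, w i * ((v ∘ Sum.inl) i - (v ∘ Sum.inr) i) ^ 2 :=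
      Finset.sum_nonneg fun i _ => mul_nonneg (hw i) (sq_nonneg _)
    have h4 := supra_quad L₁ L₂ w (v ∘ Sum.inl) (v ∘ Sum.inr)
    rw [Sum.elim_comp_inl_inr] at h4
    rw [star_trivial] at h1 h2
    rw [h4]
    positivity
  · obtain ⟨s, hs⟩ : ∃ s : ℝ, s * s = 1 / (2 * N) :=
      ⟨Real.sqrt (1 / (2 * N)), Real.mul_self_sqrt (by positivity)⟩
    have e : (fun _ : Fin N => s) = s • (fun _ : Fin N => (1 : ℝ)) := by
      ext i; simp
    refine ⟨Sum.elim (fun _ => s) (fun _ => -s), ?_, ?_, ?_⟩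
    · simp [dotProduct, hs]
      field_simp
      norm_num
    · simp [dotProduct]
    · have e2 : (fun _ : Fin N => -s) = (-s) • (fun _ : Fin N => (1 : ℝ)) := by
        ext i; simp
      have z1 : L₁ *ᵥ (fun _ : Fin N => s) = 0 := by rw [e, mulVec_smul, hL₁1, smul_zero]
      have z2 : L₂ *ᵥ (fun _ : Fin N => -s) = 0 := by rw [e2, mulVec_smul, hL₂1, smul_zero]
      rw [supra_quad, z1, z2, dotProduct_zero, dotProduct_zero, ← Finset.sum_mul, ← hc]
      have : (s - -s) ^ 2 = 4 * (s * s) := by ring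
      rw [this, hs]
      field_simp
      ring
end

section
/- Let w ∈ ℝ^N be a nonnegative weight vector with Σᵢ wᵢ = c. If the algebraic connectivity of the supra-Laplacian attains the upper bound, i.e. λ₂(L(w)) = 2c/N, then the weights are uniform: w = (c/N)𝟙. -/
open Matrix

theorem quad_supra {N : ℕ} (L₁ L₂ : Matrix (Fin N) (Fin N) ℝ) (w : Fin N → ℝ)
    (x y : Fin N → ℝ) :
    Sum.elim x y ⬝ᵥ supraLaplacian L₁ L₂ w *ᵥ Sum.elim x y
      = x ⬝ᵥ L₁ *ᵥ x + y ⬝ᵥ L₂ *ᵥ y + ∑ i, w i * (x i - y i) ^ 2 := by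
  have h : ∑ i, w i * (x i - y i) ^ 2 = x ⬝ᵥ diagonal w *ᵥ x - x ⬝ᵥ diagonal w *ᵥ y
      - y ⬝ᵥ diagonal w *ᵥ x + y ⬝ᵥ diagonal w *ᵥ y := by
    simp only [dotProduct, mulVec_diagonal, ← Finset.sum_sub_distrib, ← Finset.sum_add_distrib]
    exact Finset.sum_congr rfl fun i _ => by ring
  rw [h, supraLaplacian, fromBlocks_mulVec, sumElim_dotProduct_sumElim]
  simp only [Sum.elim_comp_inl, Sum.elim_comp_inr, add_mulVec, neg_mulVec, dotProduct_add,
    dotProduct_neg]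
  ring

theorem quad_nonneg {N : ℕ} (L₁ L₂ : Matrix (Fin N) (Fin N) ℝ)
    (hL₁ : L₁.PosSemidef) (hL₂ : L₂.PosSemidef)
    (w : Fin N → ℝ) (hw : ∀ i, 0 ≤ w i) (v : Fin N ⊕ Fin N → ℝ) :
    0 ≤ v ⬝ᵥ supraLaplacian L₁ L₂ w *ᵥ v := by
  rw [← Sum.elim_comp_inl_inr v, quad_supra]
  have h1 := hL₁.dotProduct_mulVec_nonneg (v ∘ Sum.inl)
  have h2 := hL₂.dotProduct_mulVec_nonneg (v ∘ Sum.inr)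
  rw [star_trivial] at h1 h2
  have h3 := Finset.sum_nonneg (s := Finset.univ) fun i _ =>
    mul_nonneg (hw i) (sq_nonneg ((v ∘ Sum.inl) i - (v ∘ Sum.inr) i))
  linarith

theorem lambda2_le {n : Type*} [Fintype n] (M : Matrix n n ℝ)
    (hM : ∀ v : n → ℝ, 0 ≤ v ⬝ᵥ M *ᵥ v) (v : n → ℝ) (hv : v ⬝ᵥ (fun _ => 1) = 0) :
    lambda2 M * (v ⬝ᵥ v) ≤ v ⬝ᵥ M *ᵥ v := by
  by_cases h0 : v ⬝ᵥ v = 0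
  · rw [h0, mul_zero]; exact hM v
  have hpos : 0 < v ⬝ᵥ v := lt_of_le_of_ne (by
    simpa using dotProduct_star_self_nonneg v) (Ne.symm h0)
  have hs : √(v ⬝ᵥ v) ^ 2 = v ⬝ᵥ v := Real.sq_sqrt hpos.le
  have hb : BddBelow {x : ℝ | ∃ v : n → ℝ, v ⬝ᵥ v = 1 ∧ v ⬝ᵥ (fun _ => 1) = 0 ∧
      x = v ⬝ᵥ M *ᵥ v} := ⟨0, by rintro _ ⟨u, _, _, rfl⟩; exact hM u⟩
  have hi : ∀ a b : ℝ, (√b)⁻¹ * ((√b)⁻¹ * a) = a / √b ^ 2 := fun a b => by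
    rw [div_eq_inv_mul, ← inv_pow]; ring
  have hle : lambda2 M ≤ (v ⬝ᵥ M *ᵥ v) / (v ⬝ᵥ v) := by
    refine csInf_le hb ⟨(√(v ⬝ᵥ v))⁻¹ • v, ?_, ?_, ?_⟩
    · simp only [smul_dotProduct, dotProduct_smul, smul_eq_mul]
      rw [hi, hs, div_self h0]
    · rw [smul_dotProduct, hv, smul_zero]
    · simp only [smul_dotProduct, dotProduct_smul, mulVec_smul, smul_eq_mul]
      rw [hi, hs]
  exact (le_div_iff₀ hpos).1 hle

theorem lin_zero (K b : ℝ) (h : ∀ t : ℝ, 0 ≤ K * t ^ 2 + b * t) : b = 0 := by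
  have h1 := h (-b / (|K| + 1))
  have hK : 0 < |K| + 1 := by positivity
  have e : K * (-b / (|K| + 1)) ^ 2 + b * (-b / (|K| + 1))
      = b ^ 2 * (K - (|K| + 1)) / (|K| + 1) ^ 2 := by field_simp; ring
  rw [e] at h1
  have h2 : 0 ≤ b ^ 2 * (K - (|K| + 1)) := by
    by_contra hc
    exact absurd h1 (not_le.2 (div_neg_of_neg_of_pos (not_le.1 hc) (by positivity)))
  have := le_abs_self K
  nlinarith [sq_nonneg b]

theorem quad_pert {N : ℕ} (L : Matrix (Fin N) (Fin N) ℝ) (hL : L.PosSemidef)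
    (h1 : L *ᵥ (fun _ => 1) = 0) (a : Fin N → ℝ) (t : ℝ) :
    ((fun _ => 1) + t • a) ⬝ᵥ L *ᵥ ((fun _ => 1) + t • a) = t ^ 2 * (a ⬝ᵥ L *ᵥ a) := by
  have hT : Lᵀ = L := by simpa using hL.isHermitian.eq
  have h2 : (fun _ => 1) ⬝ᵥ L *ᵥ a = 0 := by
    rw [dotProduct_mulVec, ← mulVec_transpose, hT, h1, zero_dotProduct]
  rw [mulVec_add, h1, zero_add, mulVec_smul, add_dotProduct, dotProduct_smul, h2]
  simp only [smul_dotProduct, dotProduct_smul, smul_eq_mul]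
  ring

theorem stmt4 {N : ℕ} (hN : 1 ≤ N)
    (L₁ L₂ : Matrix (Fin N) (Fin N) ℝ)
    (hL₁ : L₁.PosSemidef) (hL₂ : L₂.PosSemidef)
    (hL₁1 : L₁ *ᵥ (fun _ => 1) = 0) (hL₂1 : L₂ *ᵥ (fun _ => 1) = 0)
    (w : Fin N → ℝ) (hw : ∀ i, 0 ≤ w i) (c : ℝ) (hc : c = ∑ i, w i)
    (hopt : lambda2 (supraLaplacian L₁ L₂ w) = 2 * c / N) :
    w = fun _ => c / N := by
  funext i
  have hN0 : (N : ℝ) ≠ 0 := by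
    have : N ≠ 0 := by omega
    exact_mod_cast this
  set a : Fin N → ℝ := Pi.single i 1 with ha
  have key : ∀ t : ℝ, 0 ≤ (a ⬝ᵥ L₁ *ᵥ a + a ⬝ᵥ L₂ *ᵥ a + 4 * w i - 4 * (c / N)) * t ^ 2
      + (8 * (w i - c / N)) * t := by
    intro t
    set x : Fin N → ℝ := (fun _ => 1) + t • a with hx
    have hle := lambda2_le (supraLaplacian L₁ L₂ w) (quad_nonneg L₁ L₂ hL₁ hL₂ w hw)
      (Sum.elim x (-x)) (by simp [dotProduct])
    rw [quad_supra, hopt, sumElim_dotProduct_sumElim, mulVec_neg, neg_dotProduct_neg,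
      neg_dotProduct_neg, quad_pert L₁ hL₁ hL₁1, quad_pert L₂ hL₂ hL₂1] at hle
    have hxi : ∀ j, x j ^ 2 = 1 + (2 * t + t ^ 2) * a j := by
      intro j
      by_cases hj : j = i
      · subst hj; simp [hx, ha]; ring
      · simp [hx, ha, hj]
    have hxx : x ⬝ᵥ x = N + (2 * t + t ^ 2) := by
      have : x ⬝ᵥ x = ∑ j, x j ^ 2 := Finset.sum_congr rfl fun j _ => by ring
      rw [this]
      simp only [hxi, Finset.sum_add_distrib, ← Finset.mul_sum]
      simp [ha]
    have hww : ∑ j, w j * (x j - (-x) j) ^ 2 = 4 * (c + (2 * t + t ^ 2) * w i) := by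
      have : ∀ j, w j * (x j - (-x) j) ^ 2 = 4 * (w j + (2 * t + t ^ 2) * (w j * a j)) := by
        intro j
        have := hxi j
        simp only [Pi.neg_apply]
        linear_combination 4 * w j * this
      simp only [this, Finset.sum_add_distrib, ← Finset.mul_sum, ← hc]
      simp [ha, Pi.single_apply]
    rw [hxx, hww] at hle
    have e : 2 * c / N * (N + (2 * t + t ^ 2) + (N + (2 * t + t ^ 2)))
        = 4 * c + 4 * (c / N) * (2 * t + t ^ 2) := by field_simp; ring
    rw [e] at hle
    linarith
  have := lin_zero _ _ key
  linarith
end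

section
/- Let c ≥ 0 and consider the uniform weights w = (c/N)𝟙. For any α ∈ ℝ and any u₁, u₂ ∈ ℝ^N with u₁ᵀ𝟙 = u₂ᵀ𝟙 = 0, the vector v = (α𝟙 + u₁, −α𝟙 + u₂) ∈ ℝ^{2N} satisfies the identity vᵀ L(w) v − (2c/N)‖v‖² = u₁ᵀL₁u₁ + u₂ᵀL₂u₂ − (c/N)‖u₁ + u₂‖². -/
open Matrix

theorem quad_shift {N : ℕ} (L : Matrix (Fin N) (Fin N) ℝ) (hL : L.PosSemidef)
    (h1 : L *ᵥ (fun _ => 1) = 0) (a : ℝ) (u : Fin N → ℝ) :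
    (fun i => a + u i) ⬝ᵥ L *ᵥ (fun i => a + u i) = u ⬝ᵥ L *ᵥ u := by
  have hT : Lᵀ = L := by
    have := hL.isHermitian.eq
    rwa [Matrix.conjTranspose_eq_transpose_of_trivial] at this
  have e : (fun i => a + u i) = a • (fun _ => (1 : ℝ)) + u := by
    ext i; simp
  have h2 : (fun _ => (1 : ℝ)) ⬝ᵥ L *ᵥ u = 0 := by
    rw [Matrix.dotProduct_mulVec, ← Matrix.mulVec_transpose, hT, h1, zero_dotProduct]
  rw [e, Matrix.mulVec_add, Matrix.mulVec_smul, h1, smul_zero, zero_add, add_dotProduct,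
    smul_dotProduct, h2, smul_zero, zero_add]

theorem stmt5 {N : ℕ} (hN : 1 ≤ N)
    (L₁ L₂ : Matrix (Fin N) (Fin N) ℝ)
    (hL₁ : L₁.PosSemidef) (hL₂ : L₂.PosSemidef)
    (hL₁1 : L₁ *ᵥ (fun _ => 1) = 0) (hL₂1 : L₂ *ᵥ (fun _ => 1) = 0)
    (c : ℝ) (hc : 0 ≤ c)
    (α : ℝ) (u₁ u₂ : Fin N → ℝ)
    (hu₁ : u₁ ⬝ᵥ (fun _ => 1) = 0) (hu₂ : u₂ ⬝ᵥ (fun _ => 1) = 0)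
    (v : Fin N ⊕ Fin N → ℝ)
    (hv : v = Sum.elim (fun i => α + u₁ i) (fun i => -α + u₂ i)) :
    v ⬝ᵥ (supraLaplacian L₁ L₂ (fun _ => c / N)) *ᵥ v - (2 * c / N) * (v ⬝ᵥ v) =
      u₁ ⬝ᵥ L₁ *ᵥ u₁ + u₂ ⬝ᵥ L₂ *ᵥ u₂ - (c / N) * ((u₁ + u₂) ⬝ᵥ (u₁ + u₂)) := by
  subst hv
  have q₁ := quad_shift L₁ hL₁ hL₁1 α u₁
  have q₂ := quad_shift L₂ hL₂ hL₂1 (-α) u₂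
  rw [← q₁, ← q₂]
  have e : u₁ + u₂ = (fun i => α + u₁ i) + (fun i => -α + u₂ i) := by
    ext i; simp only [Pi.add_apply]; ring
  rw [e]
  unfold supraLaplacian
  rw [Matrix.fromBlocks_mulVec, sumElim_dotProduct_sumElim,
    sumElim_dotProduct_sumElim]
  simp only [Sum.elim_comp_inl, Sum.elim_comp_inr, Matrix.add_mulVec, Matrix.neg_mulVec,
    dotProduct_add, dotProduct_neg]
  have key : ∀ x y : Fin N → ℝ,
      x ⬝ᵥ Matrix.diagonal (fun _ => c / (N : ℝ)) *ᵥ y = c / N * (x ⬝ᵥ y) := by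
    intro x y
    simp only [dotProduct, Matrix.mulVec_diagonal, Finset.mul_sum]
    exact Finset.sum_congr rfl fun i _ => by ring
  generalize (fun i => α + u₁ i) = x
  generalize (fun i => -α + u₂ i) = y
  simp only [key, add_dotProduct, dotProduct_add]
  rw [dotProduct_comm y x]
  ring
end

section
/- Assume N ≥ 2 and that the two layers are identical, L₁ = L₂ = L₀. Then (i) for all u₁, u₂ ∈ ℝ^N with u₁ᵀ𝟙 = u₂ᵀ𝟙 = 0 one has u₁ᵀL₀u₁ + u₂ᵀL₀u₂ ≥ (λ₂(L₀)/2)·‖u₁ + u₂‖², and (ii) there exist u₁, u₂ ∈ ℝ^N with u₁ᵀ𝟙 = u₂ᵀ𝟙 = 0 and u₁ + u₂ ≠ 0 for which equality holds. Equivalently, the threshold budget c* = N · inf{(u₁ᵀL₀u₁ + u₂ᵀL₀u₂)/‖u₁+u₂‖² : u₁ᵀ𝟙 = u₂ᵀ𝟙 = 0, u₁ + u₂ ≠ 0} equals (N/2)·λ₂(L₀). -/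
open Matrix

lemma lam_set_nonneg {N : ℕ} (L : Matrix (Fin N) (Fin N) ℝ) (hL : L.PosSemidef) (v : Fin N → ℝ) :
    0 ≤ v ⬝ᵥ L *ᵥ v := by
  have := hL.dotProduct_mulVec_nonneg v
  simpa using this

lemma lam_nonneg {N : ℕ} (L : Matrix (Fin N) (Fin N) ℝ) (hL : L.PosSemidef) :
    0 ≤ lambda2 L := by
  apply Real.sInf_nonneg
  rintro x ⟨v, -, -, rfl⟩
  exact lam_set_nonneg L hL v

lemma lam_le {N : ℕ} (L : Matrix (Fin N) (Fin N) ℝ) (hL : L.PosSemidef) (w : Fin N → ℝ)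
    (hw : w ⬝ᵥ (fun _ => 1) = 0) : lambda2 L * (w ⬝ᵥ w) ≤ w ⬝ᵥ L *ᵥ w := by
  by_cases h0 : w = 0
  · subst h0; simp
  have hpos : 0 < w ⬝ᵥ w := by
    have h1 : 0 ≤ w ⬝ᵥ w := Finset.sum_nonneg fun i _ => mul_self_nonneg (w i)
    have h2 : w ⬝ᵥ w ≠ 0 := fun h => h0 (dotProduct_self_eq_zero.mp h)
    exact lt_of_le_of_ne h1 h2.symm
  set s := Real.sqrt (w ⬝ᵥ w) with hs
  have hss : s * s = w ⬝ᵥ w := Real.mul_self_sqrt hpos.le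
  have hs0 : s ≠ 0 := (Real.sqrt_pos.mpr hpos).ne'
  have key : lambda2 L ≤ (s⁻¹ • w) ⬝ᵥ L *ᵥ (s⁻¹ • w) := by
    apply csInf_le
    · refine ⟨0, ?_⟩
      rintro x ⟨v, -, -, rfl⟩
      exact lam_set_nonneg L hL v
    · refine ⟨s⁻¹ • w, ?_, ?_, rfl⟩
      · simp only [smul_dotProduct, dotProduct_smul, smul_eq_mul, ← hss]
        field_simp
      · rw [smul_dotProduct, hw, smul_zero]
  simp only [mulVec_smul, smul_dotProduct, dotProduct_smul, smul_eq_mul] at key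
  calc lambda2 L * (w ⬝ᵥ w) ≤ (s⁻¹ * (s⁻¹ * (w ⬝ᵥ L *ᵥ w))) * (w ⬝ᵥ w) :=
        mul_le_mul_of_nonneg_right key hpos.le
    _ = w ⬝ᵥ L *ᵥ w := by rw [← hss]; field_simp

lemma lam_attained {N : ℕ} (hN : 2 ≤ N) (L : Matrix (Fin N) (Fin N) ℝ) :
    ∃ v : Fin N → ℝ, v ⬝ᵥ v = 1 ∧ v ⬝ᵥ (fun _ => 1) = 0 ∧ lambda2 L = v ⬝ᵥ L *ᵥ v := by
  let S : Set (Fin N → ℝ) := {v | v ⬝ᵥ v = 1 ∧ v ⬝ᵥ (fun _ => 1) = 0}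
  have hcl : IsClosed S := by
    apply IsClosed.inter
    · exact isClosed_eq (by unfold dotProduct; fun_prop) continuous_const
    · exact isClosed_eq (by unfold dotProduct; fun_prop) continuous_const
  have hbd : S ⊆ Metric.closedBall 0 1 := by
    rintro v ⟨hv, -⟩
    rw [mem_closedBall_zero_iff, pi_norm_le_iff_of_nonneg zero_le_one]
    intro i
    have : v i * v i ≤ v ⬝ᵥ v :=
      Finset.single_le_sum (f := fun j => v j * v j) (fun j _ => mul_self_nonneg (v j))
        (Finset.mem_univ i)
    rw [Real.norm_eq_abs, abs_le]
    constructor <;> nlinarith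
  have hcomp : IsCompact S := (isCompact_closedBall 0 1).of_isClosed_subset hcl hbd
  have hne : S.Nonempty := by
    let a : Fin N := ⟨0, by omega⟩
    let b : Fin N := ⟨1, by omega⟩
    have hab : a ≠ b := by simp [a, b]
    have h2 : Real.sqrt 2 * Real.sqrt 2 = 2 := Real.mul_self_sqrt (by norm_num)
    have h3 : Real.sqrt 2 ≠ 0 := by positivity
    refine ⟨(Real.sqrt 2)⁻¹ • (Pi.single a 1 - Pi.single b 1), ?_, ?_⟩
    · simp only [smul_dotProduct, dotProduct_smul, smul_eq_mul, sub_dotProduct,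
        dotProduct_sub, single_dotProduct, Pi.single_eq_same, Pi.single_eq_of_ne hab,
        Pi.single_eq_of_ne hab.symm]
      field_simp
      nlinarith
    · simp [smul_dotProduct, sub_dotProduct, single_dotProduct]
  obtain ⟨v, hv, hmin⟩ := hcomp.exists_isMinOn hne
    (f := fun v => v ⬝ᵥ L *ᵥ v) (by unfold mulVec dotProduct; fun_prop)
  refine ⟨v, hv.1, hv.2, ?_⟩
  apply IsLeast.csInf_eq
  refine ⟨⟨v, hv.1, hv.2, rfl⟩, ?_⟩
  rintro x ⟨w, h1, h2, rfl⟩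
  exact hmin (show w ∈ S from ⟨h1, h2⟩)

theorem stmt12 {N : ℕ} (hN : 2 ≤ N)
    (L₀ : Matrix (Fin N) (Fin N) ℝ)
    (hL₀ : L₀.PosSemidef) (hL₀1 : L₀ *ᵥ (fun _ => 1) = 0) :
    (∀ u₁ u₂ : Fin N → ℝ, u₁ ⬝ᵥ (fun _ => 1) = 0 → u₂ ⬝ᵥ (fun _ => 1) = 0 →
      u₁ ⬝ᵥ L₀ *ᵥ u₁ + u₂ ⬝ᵥ L₀ *ᵥ u₂ ≥
        (lambda2 L₀ / 2) * ((u₁ + u₂) ⬝ᵥ (u₁ + u₂))) ∧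
    (∃ u₁ u₂ : Fin N → ℝ, u₁ ⬝ᵥ (fun _ => 1) = 0 ∧ u₂ ⬝ᵥ (fun _ => 1) = 0 ∧
      u₁ + u₂ ≠ 0 ∧
      u₁ ⬝ᵥ L₀ *ᵥ u₁ + u₂ ⬝ᵥ L₀ *ᵥ u₂ =
        (lambda2 L₀ / 2) * ((u₁ + u₂) ⬝ᵥ (u₁ + u₂))) := by
  constructor
  · intro u₁ u₂ h₁ h₂
    have a := lam_le L₀ hL₀ u₁ h₁
    have b := lam_le L₀ hL₀ u₂ h₂
    have c := lam_nonneg L₀ hL₀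
    have d : 0 ≤ (u₁ - u₂) ⬝ᵥ (u₁ - u₂) :=
      Finset.sum_nonneg fun i _ => mul_self_nonneg ((u₁ - u₂) i)
    have e := mul_nonneg c d
    simp only [sub_dotProduct, dotProduct_sub, add_dotProduct, dotProduct_add] at e ⊢
    nlinarith
  · obtain ⟨v, h1, h2, h3⟩ := lam_attained hN L₀
    refine ⟨v, v, h2, h2, ?_, ?_⟩
    · intro h
      have h4 : (v + v) ⬝ᵥ (v + v) = 0 := by rw [h]; simp
      simp only [add_dotProduct, dotProduct_add, h1] at h4
      norm_num at h4
    · simp only [add_dotProduct, dotProduct_add, h1, ← h3]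
      ring
end

section
/- Let u₁, u₂ ∈ ℝ^N satisfy u₁ᵀ𝟙 = u₂ᵀ𝟙 = 0 and L₁u₁ = L₂u₂. Then the pair (u₁, u₂) minimizes the combined layer energy among all decompositions of u₁ + u₂: for all w₁, w₂ ∈ ℝ^N with w₁ᵀ𝟙 = w₂ᵀ𝟙 = 0 and w₁ + w₂ = u₁ + u₂, one has w₁ᵀL₁w₁ + w₂ᵀL₂w₂ ≥ u₁ᵀL₁u₁ + u₂ᵀL₂u₂. -/
open Matrix

theorem aux_energy {N : ℕ} (L : Matrix (Fin N) (Fin N) ℝ) (hL : L.PosSemidef)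
    (u w : Fin N → ℝ) :
    2 * (w ⬝ᵥ L *ᵥ u) - u ⬝ᵥ L *ᵥ u ≤ w ⬝ᵥ L *ᵥ w := by
  have h := hL.dotProduct_mulVec_nonneg (w - u)
  have ht : Lᵀ = L := by simpa [Matrix.IsHermitian] using hL.1
  have hs : u ⬝ᵥ L *ᵥ w = w ⬝ᵥ L *ᵥ u := by
    rw [Matrix.dotProduct_mulVec, ← Matrix.mulVec_transpose, ht, dotProduct_comm]
  simp only [star_trivial, Matrix.mulVec_sub, dotProduct_sub, sub_dotProduct] at h
  linarith

theorem stmt14 {N : ℕ} (hN : 1 ≤ N)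
    (L₁ L₂ : Matrix (Fin N) (Fin N) ℝ)
    (hL₁ : L₁.PosSemidef) (hL₂ : L₂.PosSemidef)
    (hL₁1 : L₁ *ᵥ (fun _ => 1) = 0) (hL₂1 : L₂ *ᵥ (fun _ => 1) = 0)
    (u₁ u₂ : Fin N → ℝ)
    (hu₁ : u₁ ⬝ᵥ (fun _ => 1) = 0) (hu₂ : u₂ ⬝ᵥ (fun _ => 1) = 0)
    (hstat : L₁ *ᵥ u₁ = L₂ *ᵥ u₂) :
    ∀ w₁ w₂ : Fin N → ℝ, w₁ ⬝ᵥ (fun _ => 1) = 0 → w₂ ⬝ᵥ (fun _ => 1) = 0 →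
      w₁ + w₂ = u₁ + u₂ →
      w₁ ⬝ᵥ L₁ *ᵥ w₁ + w₂ ⬝ᵥ L₂ *ᵥ w₂ ≥ u₁ ⬝ᵥ L₁ *ᵥ u₁ + u₂ ⬝ᵥ L₂ *ᵥ u₂ := by
  intro w₁ w₂ _ _ hw
  have h₁ := aux_energy L₁ hL₁ u₁ w₁
  have h₂ := aux_energy L₂ hL₂ u₂ w₂
  have h := congrArg (fun v => v ⬝ᵥ L₂ *ᵥ u₂) hw
  simp only [add_dotProduct] at h
  rw [hstat] at h₁ ⊢
  linarith
end
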